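/- (Lower-bound propagation step.) Let $1\le k\le n$ be integers and $U=\{1,\dots,n\}$; each item $a\in U$ has a utility $u_a\in\mathbb R$ and a consideration probability $p_a\in(0,1]$. A length-$k$ ranking is a tuple $r=(r_1,\dots,r_k)$ of distinct items of $U$. For $C\subseteq U$ put $$\Pr\nolimits_{\mathrm{PL}}(r\mid C)=\prod_{s=1}^{k}\frac{\exp(u_{r_s})}{\sum_{t\in C\setminus\{r_1,\dots,r_{s-1}\}}\exp(u_t)}\quad\text{if }\{r_1,\dots,r_k\}\subseteq C,$$ and $\Pr_{\mathrm{PL}}(r\mid C)=0$ otherwise. Let $w(C)=\prod_{a\in C}p_a\prod_{a\in U\setminus C}(1-p_a)$, and let $\Pr_{\mathrm C}(C)=w(C)/\sum_{C'\subseteq U,\,|C'|\ge k}w(C')$ if $|C|\ge k$ and $\Pr_{\mathrm C}(C)=0$ if $|C|<k$. The PL+C (Plackett--Luce with consideration) probability of $r$ is $\Pr_{\mathrm{PL+C}}(r)=\sum_{C\subseteq U}\Pr_{\mathrm C}(C)\Pr_{\mathrm{PL}}(r\mid C)$, and $\Pr_{\mathrm{PL+C}}(R)=\sum_{r\in R}\Pr_{\mathrm{PL+C}}(r)$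 for a set $R$ of rankings. Let $R_{a\le\ell}$ be the set of length-$k$ rankings that contain item $a$ in one of the first $\ell$ positions. Let $i,j\in U$ with $u_i>u_j$. Suppose that $$c=\frac{\Pr_{\mathrm{PL+C}}(R_{i\le\ell})}{\Pr_{\mathrm{PL+C}}(R_{j\le\ell})}\le 1$$ for some integer $\ell$ with $1\le\ell\le k$ and $\ell<n$ (that is, any $1\le\ell\le k$, except that $\ell=k=n$ is excluded), and that $b_i\in[0,1)$ satisfies $b_i\le p_i$. Then $$p_j\ \ge\ \frac{b_i}{c-c\,b_i+b_i}.$$ -/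

import Mathlib

noncomputable section

/-- Unnormalized weight of a consideration set `C`: each item `i ∈ C` is considered
(factor `p i`), each item `j ∉ C` is not (factor `1 - p j`). -/
def considerWeight (n : ℕ) (p : Fin n → ℝ) (C : Finset (Fin n)) : ℝ :=
  (∏ i ∈ C, p i) * ∏ j ∈ Cᶜ, (1 - p j)

/-- Normalizing constant `z_{k,p}`: total weight of consideration sets of size at least `k`. -/
def zConst (n k : ℕ) (p : Fin n → ℝ) : ℝ :=
  ∑ C ∈ Finset.univ.filter (fun C : Finset (Fin n) => k ≤ C.card), considerWeight n p C

/-- Probability of the consideration set `C`, conditioned on `|C| ≥ k`. -/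
def prC (n k : ℕ) (p : Fin n → ℝ) (C : Finset (Fin n)) : ℝ :=
  if k ≤ C.card then considerWeight n p C / zConst n k p else 0

/-- Plackett–Luce probability of the length-`k` ranking `r` given the consideration set `C`.
A ranking is an injection `Fin k ↪ Fin n`; position `t` (counted from `0`) holds item `r t`. -/
def prPL (n k : ℕ) (u : Fin n → ℝ) (r : Fin k ↪ Fin n) (C : Finset (Fin n)) : ℝ :=
  if ∀ t : Fin k, r t ∈ C then
    ∏ t : Fin k, Real.exp (u (r t)) /
      ∑ j ∈ C \ (Finset.Iio t).image r, Real.exp (u j)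
  else 0

/-- Plackett–Luce-with-consideration (PL+C) probability of the ranking `r`. -/
def prPLC (n k : ℕ) (u p : Fin n → ℝ) (r : Fin k ↪ Fin n) : ℝ :=
  ∑ C : Finset (Fin n), prC n k p C * prPL n k u r C

/-- PL+C probability of a set of rankings. -/
def prPLCset (n k : ℕ) (u p : Fin n → ℝ) (R : Finset (Fin k ↪ Fin n)) : ℝ :=
  ∑ r ∈ R, prPLC n k u p r

/-- `R_{i≤ℓ}`: the set of length-`k` rankings with item `i` among the top `ℓ` positions. -/
def topSet (n k : ℕ) (i : Fin n) (ℓ : ℕ) : Finset (Fin k ↪ Fin n) :=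
  Finset.univ.filter (fun r => ∃ t : Fin k, (t : ℕ) < ℓ ∧ r t = i)

end

/-- The probability that a Plackett–Luce process with item weights `v`, drawing `m` items
successively and without replacement from `C`, never draws item `i`. -/
noncomputable def avoidProb {α : Type*} [DecidableEq α] (v : α → ℝ) (i : α) :
    ℕ → Finset α → ℝ
  | 0, _ => 1
  | m + 1, C => ∑ a ∈ C.erase i, v a / (∑ b ∈ C, v b) * avoidProb v i m (C.erase a)

section AvoidProb

variable {α : Type*} [DecidableEq α] {v : α → ℝ}

theorem avoidProb_nonneg (hv : ∀ a, 0 < v a) (i : α) (m : ℕ) (C : Finset α) :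
    0 ≤ avoidProb v i m C := by
  induction m generalizing C with
  | zero => exact zero_le_one
  | succ m ih =>
    exact Finset.sum_nonneg fun a _ =>
      mul_nonneg (div_nonneg (hv a).le (Finset.sum_nonneg fun b _ => (hv b).le)) (ih _)

theorem avoidProb_pos (hv : ∀ a, 0 < v a) (i : α) (m : ℕ) (C : Finset α)
    (hm : m ≤ (C.erase i).card) : 0 < avoidProb v i m C := by
  induction m generalizing C with
  | zero => exact zero_lt_one
  | succ m ih =>
    have hne : (C.erase i).Nonempty := Finset.card_pos.mp (by omega)
    refine Finset.sum_pos (fun a ha => ?_) hne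
    have haC := Finset.mem_of_mem_erase ha
    refine mul_pos (div_pos (hv a) (Finset.sum_pos (fun b _ => hv b) ⟨a, haC⟩)) (ih _ ?_)
    rw [Finset.erase_right_comm, Finset.card_erase_of_mem ha]
    omega

theorem avoidProb_le_one (hv : ∀ a, 0 < v a) (i : α) (m : ℕ) (C : Finset α) :
    avoidProb v i m C ≤ 1 := by
  induction m generalizing C with
  | zero => exact le_rfl
  | succ m ih =>
    have hS : 0 ≤ ∑ b ∈ C, v b := Finset.sum_nonneg fun b _ => (hv b).le
    calc avoidProb v i (m + 1) C
        ≤ ∑ a ∈ C.erase i, v a / (∑ b ∈ C, v b) :=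
          Finset.sum_le_sum fun a _ => mul_le_of_le_one_right (div_nonneg (hv a).le hS) (ih _)
      _ ≤ ∑ a ∈ C, v a / (∑ b ∈ C, v b) :=
          Finset.sum_le_sum_of_subset_of_nonneg (Finset.erase_subset _ _)
            fun a _ _ => div_nonneg (hv a).le hS
      _ ≤ 1 := by
          rw [← Finset.sum_div]
          exact div_self_le_one _

theorem avoidProb_succ_lt_one (hv : ∀ a, 0 < v a) {i : α} (m : ℕ) {C : Finset α}
    (hi : i ∈ C) : avoidProb v i (m + 1) C < 1 := by
  have hS : 0 < ∑ b ∈ C, v b := Finset.sum_pos (fun b _ => hv b) ⟨i, hi⟩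
  calc avoidProb v i (m + 1) C
      ≤ ∑ a ∈ C.erase i, v a / (∑ b ∈ C, v b) :=
        Finset.sum_le_sum fun a _ =>
          mul_le_of_le_one_right (div_nonneg (hv a).le hS.le) (avoidProb_le_one hv _ _ _)
    _ < 1 := by
        rw [← Finset.sum_div, div_lt_one hS, ← Finset.add_sum_erase C v hi]
        linarith [hv i]

/-- Giving the distinguished item a larger weight makes it less likely to be avoided. -/
theorem avoidProb_insert_le (hv : ∀ a, 0 < v a) {i j : α} (hij : v j ≤ v i) (m : ℕ)
    (D : Finset α) (hi : i ∉ D) (hj : j ∉ D) :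
    avoidProb v i m (insert i D) ≤ avoidProb v j m (insert j D) := by
  induction m generalizing D with
  | zero => exact le_rfl
  | succ m ih =>
    rw [avoidProb, avoidProb, Finset.erase_insert hi, Finset.erase_insert hj,
      Finset.sum_insert hi, Finset.sum_insert hj]
    refine Finset.sum_le_sum fun a ha => ?_
    have hai : i ≠ a := fun h => hi (h ▸ ha)
    have haj : j ≠ a := fun h => hj (h ▸ ha)
    rw [Finset.erase_insert_of_ne hai, Finset.erase_insert_of_ne haj]
    have hD : 0 ≤ ∑ b ∈ D, v b := Finset.sum_nonneg fun b _ => (hv b).le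
    have h1 := ih (D.erase a) (fun h => hi (Finset.mem_of_mem_erase h))
      (fun h => hj (Finset.mem_of_mem_erase h))
    have h2 := avoidProb_nonneg hv i m (insert i (D.erase a))
    have h3 := hv a
    have h4 := hv j
    gcongr

theorem avoidProb_succ_insert_insert {i j : α} (hij : i ≠ j) (m : ℕ)
    (D : Finset α) (hi : i ∉ D) (hj : j ∉ D) :
    avoidProb v i (m + 1) (insert i (insert j D)) =
      v j / (v i + (v j + ∑ b ∈ D, v b)) * avoidProb v i m (insert i D) +
        ∑ a ∈ D, v a / (v i + (v j + ∑ b ∈ D, v b)) *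
          avoidProb v i m (insert i (insert j (D.erase a))) := by
  have hi' : i ∉ insert j D := by simp [hij, hi]
  rw [avoidProb, Finset.erase_insert hi', Finset.sum_insert hi', Finset.sum_insert hj,
    Finset.sum_insert hj, Finset.erase_insert_of_ne hij, Finset.erase_insert hj]
  congr 1
  refine Finset.sum_congr rfl fun a ha => ?_
  have hai : i ≠ a := fun h => hi (h ▸ ha)
  have haj : j ≠ a := fun h => hj (h ▸ ha)
  rw [Finset.erase_insert_of_ne hai, Finset.erase_insert_of_ne haj]

theorem avoidProb_insert_insert_le (hv : ∀ a, 0 < v a) {i j : α} (hne : i ≠ j)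
    (hij : v j ≤ v i) (m : ℕ) (D : Finset α) (hi : i ∉ D) (hj : j ∉ D) :
    avoidProb v i m (insert i (insert j D)) ≤ avoidProb v j m (insert i (insert j D)) := by
  induction m generalizing D with
  | zero => exact le_rfl
  | succ m ih =>
    rw [avoidProb_succ_insert_insert hne m D hi hj, Finset.insert_comm i j D,
      avoidProb_succ_insert_insert hne.symm m D hj hi, add_left_comm (v j)]
    have hD : 0 ≤ ∑ b ∈ D, v b := Finset.sum_nonneg fun b _ => (hv b).le
    have hvi := hv i
    have hvj := hv j
    have h1 := avoidProb_nonneg hv i m (insert i D)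
    have h2 := avoidProb_insert_le hv hij m D hi hj
    refine add_le_add (by gcongr) (Finset.sum_le_sum fun a _ => ?_)
    have h3 := ih (D.erase a) (fun h => hi (Finset.mem_of_mem_erase h))
      (fun h => hj (Finset.mem_of_mem_erase h))
    have h4 := hv a
    rw [Finset.insert_comm j i]
    gcongr

theorem avoidProb_succ_insert_insert_lt (hv : ∀ a, 0 < v a) {i j : α} (hne : i ≠ j)
    (hij : v j < v i) (m : ℕ) (D : Finset α) (hi : i ∉ D) (hj : j ∉ D) (hm : m ≤ D.card) :
    avoidProb v i (m + 1) (insert i (insert j D)) <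
      avoidProb v j (m + 1) (insert i (insert j D)) := by
  rw [avoidProb_succ_insert_insert hne m D hi hj, Finset.insert_comm i j D,
    avoidProb_succ_insert_insert hne.symm m D hj hi, add_left_comm (v j)]
  have hD : 0 ≤ ∑ b ∈ D, v b := Finset.sum_nonneg fun b _ => (hv b).le
  have hvi := hv i
  have hvj := hv j
  have h1 : 0 < avoidProb v i m (insert i D) :=
    avoidProb_pos hv i m _ (by rwa [Finset.erase_insert hi])
  have h2 := avoidProb_insert_le hv hij.le m D hi hj
  refine add_lt_add_of_lt_of_le ?_ (Finset.sum_le_sum fun a _ => ?_)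
  · refine mul_lt_mul ?_ h2 h1 (by positivity)
    gcongr
  · have h3 := avoidProb_insert_insert_le hv hne hij.le m (D.erase a)
      (fun h => hi (Finset.mem_of_mem_erase h)) (fun h => hj (Finset.mem_of_mem_erase h))
    have h4 := hv a
    rw [Finset.insert_comm j i]
    gcongr

end AvoidProb

section DrawProb

variable {α : Type*} [DecidableEq α]

/-- The Plackett–Luce probability of drawing the sequence `r` from `C`; it vanishes unless `r`
lists distinct items of `C`. -/
noncomputable def drawProb (v : α → ℝ) {k : ℕ} (r : Fin k → α) (C : Finset α) : ℝ :=
  ∏ t : Fin k, if r t ∈ C \ (Finset.Iio t).image r then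
    v (r t) / ∑ b ∈ C \ (Finset.Iio t).image r, v b else 0

theorem image_Iio_succ_cons {k : ℕ} (a : α) (r : Fin k → α) (t : Fin k) :
    (Finset.Iio t.succ).image (Fin.cons a r : Fin (k + 1) → α) =
      insert a ((Finset.Iio t).image r) := by
  ext x
  simp only [Finset.mem_image, Finset.mem_Iio, Finset.mem_insert]
  constructor
  · rintro ⟨s, hs, rfl⟩
    induction s using Fin.cases with
    | zero => exact Or.inl rfl
    | succ s => exact Or.inr ⟨s, Fin.succ_lt_succ_iff.mp hs, rfl⟩
  · rintro (rfl | ⟨s, hs, rfl⟩)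
    · exact ⟨0, Fin.succ_pos t, rfl⟩
    · exact ⟨s.succ, Fin.succ_lt_succ_iff.mpr hs, rfl⟩

theorem drawProb_cons (v : α → ℝ) {k : ℕ} (a : α) (r : Fin k → α) (C : Finset α) :
    drawProb v (Fin.cons a r : Fin (k + 1) → α) C =
      (if a ∈ C then v a / ∑ b ∈ C, v b else 0) * drawProb v r (C.erase a) := by
  have h0 : (Finset.Iio (0 : Fin (k + 1))) = ∅ := by
    ext x; simp
  rw [drawProb, Fin.prod_univ_succ, h0]
  simp only [Finset.image_empty, Finset.sdiff_empty, Fin.cons_zero, Fin.cons_succ,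
    image_Iio_succ_cons, drawProb]
  congr 1
  refine Finset.prod_congr rfl fun t _ => ?_
  have : C \ insert a ((Finset.Iio t).image r) = C.erase a \ (Finset.Iio t).image r := by
    ext x; simp; tauto
  rw [this]

theorem injective_of_drawProb_ne_zero {v : α → ℝ} {k : ℕ} {r : Fin k → α} {C : Finset α}
    (h : drawProb v r C ≠ 0) : Function.Injective r := by
  have key : ∀ s t : Fin k, s < t → r s ≠ r t := by
    intro s t hst he
    refine h (Finset.prod_eq_zero (Finset.mem_univ t) (if_neg fun hm => ?_))
    exact (Finset.mem_sdiff.mp hm).2 (Finset.mem_image.mpr ⟨s, Finset.mem_Iio.mpr hst, he⟩)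
  intro s t he
  rcases lt_trichotomy s t with hst | hst | hst
  · exact absurd he (key s t hst)
  · exact hst
  · exact absurd he.symm (key t s hst)

theorem sum_drawProb_succ [Fintype α] (v : α → ℝ) (k : ℕ) (C : Finset α)
    (f : (Fin (k + 1) → α) → ℝ) :
    ∑ r, drawProb v r C * f r = ∑ a ∈ C, v a / (∑ b ∈ C, v b) *
      ∑ r : Fin k → α, drawProb v r (C.erase a) * f (Fin.cons a r) := by
  rw [← (Fin.consEquiv fun _ : Fin (k + 1) => α).sum_comp, Fintype.sum_prod_type,
    ← Finset.sum_subset (Finset.subset_univ C)]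
  · refine Finset.sum_congr rfl fun a ha => ?_
    rw [Finset.mul_sum]
    refine Finset.sum_congr rfl fun r _ => ?_
    simp only [Fin.consEquiv, Equiv.coe_fn_mk, drawProb_cons, if_pos ha, mul_assoc]
  · intro a _ ha
    refine Finset.sum_eq_zero fun r _ => ?_
    simp only [Fin.consEquiv, Equiv.coe_fn_mk, drawProb_cons, if_neg ha, zero_mul]

theorem sum_drawProb [Fintype α] {v : α → ℝ} (hv : ∀ a, 0 < v a) (k : ℕ) (C : Finset α)
    (hk : k ≤ C.card) : ∑ r : Fin k → α, drawProb v r C = 1 := by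
  induction k generalizing C with
  | zero => simp [drawProb]
  | succ k ih =>
    have h := sum_drawProb_succ v k C fun _ => 1
    simp only [mul_one] at h
    have hS : 0 < ∑ b ∈ C, v b :=
      Finset.sum_pos (fun b _ => hv b) (Finset.card_pos.mp (by omega))
    rw [h, ← div_self hS.ne', Finset.sum_div]
    refine Finset.sum_congr rfl fun a ha => ?_
    rw [ih _ (by rw [Finset.card_erase_of_mem ha]; omega), mul_one]

/-- Only the first `ℓ` draws matter for avoiding item `i` in the first `ℓ` positions. -/
theorem sum_drawProb_avoid [Fintype α] {v : α → ℝ} (hv : ∀ a, 0 < v a) (i : α) (k ℓ : ℕ)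
    (hℓk : ℓ ≤ k) (C : Finset α) (hk : k ≤ C.card) :
    ∑ r : Fin k → α, drawProb v r C * (if ∃ t : Fin k, (t : ℕ) < ℓ ∧ r t = i then 0 else 1) =
      avoidProb v i ℓ C := by
  induction ℓ generalizing k C with
  | zero => simpa [avoidProb] using sum_drawProb hv k C hk
  | succ ℓ ih =>
    obtain ⟨k, rfl⟩ : ∃ k', k = k' + 1 := ⟨k - 1, by omega⟩
    rw [sum_drawProb_succ, avoidProb]
    refine (Finset.sum_subset_zero_on_sdiff (Finset.erase_subset i C) (fun a ha => ?_)
      fun a ha => ?_).symm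
    · obtain rfl : a = i := by
        by_contra hne
        exact (Finset.mem_sdiff.mp ha).2
          (Finset.mem_erase.mpr ⟨hne, (Finset.mem_sdiff.mp ha).1⟩)
      refine mul_eq_zero_of_right _ (Finset.sum_eq_zero fun r _ => ?_)
      rw [if_pos ⟨0, Nat.succ_pos ℓ, rfl⟩, mul_zero]
    · obtain ⟨hai, haC⟩ := Finset.mem_erase.mp ha
      rw [← ih k (by omega) (C.erase a) (by rw [Finset.card_erase_of_mem haC]; omega)]
      simp [Fin.exists_fin_succ, hai]

end DrawProb

section TopProb

variable {n k : ℕ}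

theorem prPL_eq_drawProb (u : Fin n → ℝ) (r : Fin k ↪ Fin n) (C : Finset (Fin n)) :
    prPL n k u r C = drawProb (fun a => Real.exp (u a)) r C := by
  have hr : ∀ t, r t ∉ (Finset.Iio t).image r := by
    intro t ht
    obtain ⟨s, hs, he⟩ := Finset.mem_image.mp ht
    exact (Finset.mem_Iio.mp hs).ne (r.injective he)
  unfold prPL drawProb
  split_ifs with h
  · refine Finset.prod_congr rfl fun t _ => ?_
    rw [if_pos (Finset.mem_sdiff.mpr ⟨h t, hr t⟩)]
  · obtain ⟨t, ht⟩ := not_forall.mp h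
    exact (Finset.prod_eq_zero (Finset.mem_univ t)
      (if_neg fun hm => ht (Finset.mem_sdiff.mp hm).1)).symm

/-- The Plackett–Luce probability, given `C`, that item `i` is ranked in the top `ℓ`. -/
noncomputable def topProb (k : ℕ) (u : Fin n → ℝ) (i : Fin n) (ℓ : ℕ)
    (C : Finset (Fin n)) : ℝ :=
  ∑ r ∈ topSet n k i ℓ, prPL n k u r C

theorem topProb_eq_one_sub (u : Fin n → ℝ) (i : Fin n) {ℓ : ℕ} (hℓk : ℓ ≤ k)
    {C : Finset (Fin n)} (hk : k ≤ C.card) :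
    topProb k u i ℓ C = 1 - avoidProb (fun a => Real.exp (u a)) i ℓ C := by
  have hv : ∀ a, 0 < Real.exp (u a) := fun a => Real.exp_pos _
  rw [← sum_drawProb hv k C hk, ← sum_drawProb_avoid hv i k ℓ hℓk C hk,
    ← Finset.sum_sub_distrib, topProb, topSet, Finset.sum_filter]
  refine Fintype.sum_of_injective (fun r : Fin k ↪ Fin n => (r : Fin k → Fin n))
    DFunLike.coe_injective _ _ (fun r hr => ?_) fun r => ?_
  · have : drawProb (fun a => Real.exp (u a)) r C = 0 := by
      by_contra h
      exact hr ⟨⟨r, injective_of_drawProb_ne_zero h⟩, rfl⟩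
    rw [this, zero_mul, sub_zero]
  · rw [prPL_eq_drawProb]
    by_cases h : ∃ t : Fin k, (t : ℕ) < ℓ ∧ r t = i
    · rw [if_pos h, if_pos h, mul_zero, sub_zero]
    · rw [if_neg h, if_neg h, mul_one, sub_self]

theorem topProb_of_notMem (u : Fin n → ℝ) {i : Fin n} (ℓ : ℕ) {C : Finset (Fin n)}
    (hi : i ∉ C) : topProb k u i ℓ C = 0 := by
  refine Finset.sum_eq_zero fun r hr => if_neg fun h => hi ?_
  obtain ⟨t, -, rfl⟩ := (Finset.mem_filter.mp hr).2
  exact h t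

theorem prPLCset_topSet (u p : Fin n → ℝ) (i : Fin n) (ℓ : ℕ) :
    prPLCset n k u p (topSet n k i ℓ) =
      (∑ C : Finset (Fin n), if k ≤ C.card then considerWeight n p C * topProb k u i ℓ C
        else 0) / zConst n k p := by
  unfold prPLCset prPLC topProb prC
  rw [Finset.sum_comm, Finset.sum_div]
  refine Finset.sum_congr rfl fun C _ => ?_
  rw [← Finset.mul_sum]
  split_ifs <;> ring

/-- Weight of a consideration set, restricted to the items other than `i` and `j`. -/
noncomputable def restWeight (p : Fin n → ℝ) (i j : Fin n) (D : Finset (Fin n)) : ℝ :=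
  (∏ a ∈ D, p a) * ∏ a ∈ ({i, j} : Finset (Fin n))ᶜ \ D, (1 - p a)

theorem restWeight_comm (p : Fin n → ℝ) (i j : Fin n) (D : Finset (Fin n)) :
    restWeight p i j D = restWeight p j i D := by
  rw [restWeight, restWeight, Finset.pair_comm]

theorem considerWeight_insert (p : Fin n → ℝ) {i j : Fin n} (hij : i ≠ j)
    {D : Finset (Fin n)} (hi : i ∉ D) (hj : j ∉ D) :
    considerWeight n p (insert i D) = p i * (1 - p j) * restWeight p i j D := by
  have h : (insert i D)ᶜ = insert j (({i, j} : Finset (Fin n))ᶜ \ D) := by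
    ext x
    by_cases hx : x = j
    · subst hx; simp [hj, hij.symm]
    · simp [hx]
  rw [considerWeight, h, Finset.prod_insert hi, Finset.prod_insert (by simp), restWeight]
  ring

theorem considerWeight_insert_insert (p : Fin n → ℝ) {i j : Fin n} (hij : i ≠ j)
    {D : Finset (Fin n)} (hi : i ∉ D) (hj : j ∉ D) :
    considerWeight n p (insert i (insert j D)) = p i * p j * restWeight p i j D := by
  have h : (insert i (insert j D))ᶜ = ({i, j} : Finset (Fin n))ᶜ \ D := by
    ext x; simp; tauto
  rw [considerWeight, h, Finset.prod_insert (by simp [hij, hi]), Finset.prod_insert hj,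
    restWeight]
  ring

/-- Splitting consideration sets containing `i` according to whether they contain `j`. -/
theorem sum_considerWeight_topProb (u p : Fin n → ℝ) {i j : Fin n} (hij : i ≠ j) (ℓ : ℕ) :
    (∑ C : Finset (Fin n), if k ≤ C.card then considerWeight n p C * topProb k u i ℓ C
        else 0) =
      p i * (1 - p j) * (∑ D ∈ (({i, j} : Finset (Fin n))ᶜ).powerset,
        if k ≤ D.card + 1 then restWeight p i j D * topProb k u i ℓ (insert i D) else 0) +
      p i * p j * (∑ D ∈ (({i, j} : Finset (Fin n))ᶜ).powerset,
        if k ≤ D.card + 2 then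
          restWeight p i j D * topProb k u i ℓ (insert i (insert j D)) else 0) := by
  have huniv : (Finset.univ : Finset (Fin n)) =
      insert j (insert i (({i, j} : Finset (Fin n))ᶜ)) := by
    ext x; simp; tauto
  have hmem : ∀ D ∈ (({i, j} : Finset (Fin n))ᶜ).powerset, i ∉ D ∧ j ∉ D := by
    intro D hD
    have hD := Finset.mem_powerset.mp hD
    exact ⟨fun h => by simpa using hD h, fun h => by simpa using hD h⟩
  rw [← Finset.powerset_univ, huniv, Finset.sum_powerset_insert (by simp [hij.symm]),
    Finset.sum_powerset_insert (by simp), Finset.sum_powerset_insert (by simp)]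
  rw [Finset.mul_sum, Finset.mul_sum,
    Finset.sum_eq_zero (s := (({i, j} : Finset (Fin n))ᶜ).powerset)
    (f := fun D => if k ≤ D.card then considerWeight n p D * topProb k u i ℓ D else 0),
    Finset.sum_eq_zero (s := (({i, j} : Finset (Fin n))ᶜ).powerset)
    (f := fun D => if k ≤ (insert j D).card then
      considerWeight n p (insert j D) * topProb k u i ℓ (insert j D) else 0), zero_add, zero_add]
  · congr 1
    · refine Finset.sum_congr rfl fun D hD => ?_
      obtain ⟨hi, hj⟩ := hmem D hD
      rw [Finset.card_insert_of_notMem hi, considerWeight_insert p hij hi hj]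
      split_ifs <;> ring
    · refine Finset.sum_congr rfl fun D hD => ?_
      obtain ⟨hi, hj⟩ := hmem D hD
      rw [Finset.insert_comm j i, Finset.card_insert_of_notMem (by simp [hij, hi]),
        Finset.card_insert_of_notMem hj, considerWeight_insert_insert p hij hi hj]
      split_ifs <;> ring
  · intro D hD
    rw [topProb_of_notMem u ℓ (by simp [hij, (hmem D hD).1]), mul_zero, ite_self]
  · intro D hD
    rw [topProb_of_notMem u ℓ (hmem D hD).1, mul_zero, ite_self]

theorem restWeight_nonneg {p : Fin n → ℝ} (hp : ∀ a, 0 < p a ∧ p a ≤ 1) (i j : Fin n)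
    (D : Finset (Fin n)) : 0 ≤ restWeight p i j D :=
  mul_nonneg (Finset.prod_nonneg fun a _ => (hp a).1.le)
    (Finset.prod_nonneg fun a _ => sub_nonneg.mpr (hp a).2)

theorem restWeight_compl_pos {p : Fin n → ℝ} (hp : ∀ a, 0 < p a) (i j : Fin n) :
    0 < restWeight p i j ({i, j} : Finset (Fin n))ᶜ := by
  rw [restWeight, Finset.sdiff_self, Finset.prod_empty, mul_one]
  exact Finset.prod_pos fun a _ => hp a

theorem considerWeight_nonneg {p : Fin n → ℝ} (hp : ∀ a, 0 < p a ∧ p a ≤ 1)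
    (C : Finset (Fin n)) : 0 ≤ considerWeight n p C :=
  mul_nonneg (Finset.prod_nonneg fun a _ => (hp a).1.le)
    (Finset.prod_nonneg fun a _ => sub_nonneg.mpr (hp a).2)

theorem zConst_pos {p : Fin n → ℝ} (hp : ∀ a, 0 < p a ∧ p a ≤ 1) (hkn : k ≤ n) :
    0 < zConst n k p := by
  refine Finset.sum_pos' (fun C _ => considerWeight_nonneg hp C)
    ⟨Finset.univ, by simpa using hkn, ?_⟩
  rw [considerWeight, Finset.compl_univ, Finset.prod_empty, mul_one]
  exact Finset.prod_pos fun a _ => (hp a).1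

end TopProb

/-- The ratio of top-`ℓ` probabilities as an abstract inequality: `A`, `A'` are the contributions
of consideration sets containing exactly one of the two items, `B`, `B'` those of sets
containing both. -/
theorem odds_bound_of_ratio_le_one {x y A A' B B' c b : ℝ} (hx : 0 < x) (hx1 : x ≤ 1)
    (hy : 0 < y) (hy1 : y ≤ 1) (hA : A' ≤ A) (hA' : 0 ≤ A') (hB : B' < B) (hB' : 0 < B')
    (hc : c = (x * (1 - y) * A + x * y * B) / (y * (1 - x) * A' + y * x * B'))
    (hc1 : c ≤ 1) (hb0 : 0 ≤ b) (hb1 : b < 1) (hbx : b ≤ x) :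
    b / (c - c * b + b) ≤ y := by
  have hxy : 0 < x * y := mul_pos hx hy
  have hden : 0 < y * (1 - x) * A' + y * x * B' :=
    add_pos_of_nonneg_of_pos
      (mul_nonneg (mul_nonneg hy.le (sub_nonneg.mpr hx1)) hA') (by positivity)
  have hnum : x * (1 - y) * A' + x * y * B' < x * (1 - y) * A + x * y * B :=
    add_lt_add_of_le_of_lt
      (mul_le_mul_of_nonneg_left hA (mul_nonneg hx.le (sub_nonneg.mpr hy1)))
      (mul_lt_mul_of_pos_left hB hxy)
  have hcN : c * (y * (1 - x) * A' + y * x * B') = x * (1 - y) * A + x * y * B := by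
    rw [hc, div_mul_cancel₀ _ hden.ne']
  have hc0 : 0 < c := by
    rw [hc]
    refine div_pos (lt_of_le_of_lt ?_ hnum) hden
    exact add_nonneg (mul_nonneg (mul_nonneg hx.le (sub_nonneg.mpr hy1)) hA') (by positivity)
  have hle : x ≤ y := by
    by_contra! hlt
    nlinarith [mul_le_mul_of_nonneg_right hc1 hden.le, mul_nonneg (sub_nonneg.mpr hlt.le) hA']
  have hodds : x * (1 - y) ≤ c * (y * (1 - x)) := by
    by_contra! hlt
    nlinarith [mul_le_mul_of_nonneg_right hlt.le hA',
      mul_le_mul_of_nonneg_right hc1 (mul_pos hxy hB').le]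
  have hbodds : b * (1 - y) ≤ c * y * (1 - b) := by
    rcases hx1.eq_or_lt with rfl | hxlt
    · obtain rfl : y = 1 := le_antisymm hy1 hle
      nlinarith
    · have h1 : b * (1 - x) ≤ x * (1 - b) := by nlinarith
      have h2 : x * (b * (1 - y)) ≤ x * (c * y * (1 - b)) := by
        calc x * (b * (1 - y)) = b * (x * (1 - y)) := by ring
          _ ≤ b * (c * (y * (1 - x))) := mul_le_mul_of_nonneg_left hodds hb0
          _ = (c * y) * (b * (1 - x)) := by ring
          _ ≤ (c * y) * (x * (1 - b)) := mul_le_mul_of_nonneg_left h1 (by positivity)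
          _ = x * (c * y * (1 - b)) := by ring
      exact le_of_mul_le_mul_left h2 hx
  rw [div_le_iff₀ (by nlinarith [mul_pos hc0 (sub_pos.mpr hb1)])]
  linarith

/-- Lower-bound propagation step: if `u i > u j`, `c = Pr(R_{i≤ℓ}) / Pr(R_{j≤ℓ}) ≤ 1`, and
`b ∈ [0,1)` is a lower bound on `p i`, then `p j ≥ b / (c - c * b + b)`.
The hypothesis `ℓ < n` excludes only `ℓ = k = n`, where every ranking lists all items in its
top `ℓ` positions, so that `c = 1` whatever `p` is. -/
theorem lower_bound_propagation (n k ℓ : ℕ) (u p : Fin n → ℝ) (i j : Fin n)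
    (hp : ∀ a, 0 < p a ∧ p a ≤ 1) (hu : u i > u j)
    (hℓ : 1 ≤ ℓ) (hℓk : ℓ ≤ k) (hkn : k ≤ n) (hℓn : ℓ < n)
    (c : ℝ)
    (hc : c = prPLCset n k u p (topSet n k i ℓ) / prPLCset n k u p (topSet n k j ℓ))
    (hc1 : c ≤ 1)
    (b : ℝ) (hb0 : 0 ≤ b) (hb1 : b < 1) (hbp : b ≤ p i) :
    p j ≥ b / (c - c * b + b) := by
  have hne : i ≠ j := fun h => hu.ne' (congrArg u h)
  have hv : ∀ a, 0 < Real.exp (u a) := fun a => Real.exp_pos _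
  have hlt : Real.exp (u j) < Real.exp (u i) := Real.exp_lt_exp.mpr hu
  have hmem : ∀ D ∈ (({i, j} : Finset (Fin n))ᶜ).powerset, i ∉ D ∧ j ∉ D := by
    intro D hD
    have hD := Finset.mem_powerset.mp hD
    exact ⟨fun h => by simpa using hD h, fun h => by simpa using hD h⟩
  have hcard1 : ∀ {a : Fin n} {D : Finset (Fin n)}, a ∉ D → k ≤ D.card + 1 →
      k ≤ (insert a D).card := fun ha h => by rwa [Finset.card_insert_of_notMem ha]
  have hcard2 : ∀ {D : Finset (Fin n)}, i ∉ D → j ∉ D → k ≤ D.card + 2 →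
      k ≤ (insert i (insert j D)).card := fun hi hj h => by
    rwa [Finset.card_insert_of_notMem (by simp [hne, hi]), Finset.card_insert_of_notMem hj]
  have hW := restWeight_nonneg hp i j
  have hWpos := restWeight_compl_pos (fun a => (hp a).1) i j
  have hcompl : (({i, j} : Finset (Fin n))ᶜ).card + 2 = n := by
    have h := Finset.card_compl_add_card ({i, j} : Finset (Fin n))
    rwa [Finset.card_pair hne, Fintype.card_fin] at h
  have htop := Finset.mem_powerset_self (({i, j} : Finset (Fin n))ᶜ)
  obtain ⟨m, rfl⟩ : ∃ m, ℓ = m + 1 := ⟨ℓ - 1, by omega⟩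
  have hz : zConst n k p ≠ 0 := (zConst_pos hp hkn).ne'
  rw [prPLCset_topSet, prPLCset_topSet, div_div_div_cancel_right₀ hz,
    sum_considerWeight_topProb u p hne, sum_considerWeight_topProb u p hne.symm] at hc
  simp only [Finset.pair_comm j i, restWeight_comm p j i, Finset.insert_comm j i] at hc
  refine odds_bound_of_ratio_le_one (hp i).1 (hp i).2 (hp j).1 (hp j).2 ?_ ?_ ?_ ?_ hc hc1
    hb0 hb1 hbp
  · refine Finset.sum_le_sum fun D hD => ?_
    obtain ⟨hi, hj⟩ := hmem D hD
    split_ifs with hk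
    · refine mul_le_mul_of_nonneg_left ?_ (hW D)
      rw [topProb_eq_one_sub u j hℓk (hcard1 hj hk), topProb_eq_one_sub u i hℓk (hcard1 hi hk)]
      exact sub_le_sub_left (avoidProb_insert_le hv hlt.le _ D hi hj) 1
    · exact le_rfl
  · refine Finset.sum_nonneg fun D hD => ?_
    split_ifs with hk
    · refine mul_nonneg (hW D) ?_
      rw [topProb_eq_one_sub u j hℓk (hcard1 (hmem D hD).2 hk)]
      exact sub_nonneg.mpr (avoidProb_le_one hv _ _ _)
    · exact le_rfl
  · refine Finset.sum_lt_sum (fun D hD => ?_) ⟨_, htop, ?_⟩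
    · obtain ⟨hi, hj⟩ := hmem D hD
      split_ifs with hk
      · refine mul_le_mul_of_nonneg_left ?_ (hW D)
        rw [topProb_eq_one_sub u j hℓk (hcard2 hi hj hk),
          topProb_eq_one_sub u i hℓk (hcard2 hi hj hk)]
        exact sub_le_sub_left (avoidProb_insert_insert_le hv hne hlt.le _ D hi hj) 1
      · exact le_rfl
    · obtain ⟨hi, hj⟩ := hmem _ htop
      have hk := hkn.trans hcompl.ge
      rw [if_pos hk, if_pos hk, topProb_eq_one_sub u j hℓk (hcard2 hi hj hk),
        topProb_eq_one_sub u i hℓk (hcard2 hi hj hk)]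
      exact mul_lt_mul_of_pos_left (sub_lt_sub_left
        (avoidProb_succ_insert_insert_lt hv hne hlt m _ hi hj (by omega)) 1) hWpos
  · refine Finset.sum_pos' (fun D hD => ?_) ⟨_, htop, ?_⟩
    · obtain ⟨hi, hj⟩ := hmem D hD
      split_ifs with hk
      · refine mul_nonneg (hW D) ?_
        rw [topProb_eq_one_sub u j hℓk (hcard2 hi hj hk)]
        exact sub_nonneg.mpr (avoidProb_le_one hv _ _ _)
      · exact le_rfl
    · obtain ⟨hi, hj⟩ := hmem _ htop
      have hk := hkn.trans hcompl.ge
      rw [if_pos hk, topProb_eq_one_sub u j hℓk (hcard2 hi hj hk)]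
      exact mul_pos hWpos (sub_pos.mpr (avoidProb_succ_lt_one hv m (by simp)))
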